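/- Let φ represent an outer automorphism class Φ of a group G. Two representatives τ_s∘α and τ_q∘α of Φ are isogredient (i.e., τ_q∘α = τ_h∘(τ_s∘α)∘τ_h⁻¹ for some h ∈ G) if and only if q ≡ h·s·α(h)⁻¹ modulo the center Z(G) for some h ∈ G. Consequently, the number of isogredience classes of Φ equals the Reidemeister number of the induced automorphism ᾱ of G/Z(G): S(Φ) = R_{G/Z(G)}(ᾱ). -/

import Mathlib

/-!
Conjugating by an inner automorphism turns `τ_s ∘ α` into `τ_{h s α(h)⁻¹} ∘ α`
(`conj_mul_conj_mul_conj_inv`), and `τ_a ∘ α = τ_b ∘ α` exactly when `a` and `b` agree modulo the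
center (`conj_mul_eq_iff`). So isogredience of `τ_s ∘ α` and `τ_q ∘ α` means `q ≡ h s α(h)⁻¹`
modulo the center, which is `ᾱ`-twisted conjugacy of the images of `s` and `q` in `G ⧸ Z(G)`.
The two surjections from `G`, onto isogredience classes and onto twisted conjugacy classes of
`G ⧸ Z(G)`, therefore have the same kernel, and their targets are equinumerous.
-/

/-- The setoid of `φ`-twisted conjugacy: `g ~ h` iff `h = x * g * φ(x)⁻¹` for some `x`. -/
def twistedConjSetoid {G : Type*} [Group G] (φ : G ≃* G) : Setoid G where
  r g h := ∃ x : G, h = x * g * (φ x)⁻¹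
  iseqv := by
    refine ⟨fun g => ⟨1, by simp⟩, ?_, ?_⟩
    · rintro g h ⟨x, rfl⟩
      exact ⟨x⁻¹, by simp [mul_assoc]⟩
    · rintro a b c ⟨x, rfl⟩ ⟨y, rfl⟩
      exact ⟨y * x, by simp [map_mul, mul_assoc]⟩

/-- Two automorphisms are isogredient if they are conjugate by an inner automorphism. -/
def Isogredient {G : Type*} [Group G] (β₁ β₂ : MulAut G) : Prop :=
  ∃ h : G, β₂ = MulAut.conj h * β₁ * (MulAut.conj h)⁻¹

/-- The setoid of isogredience on the set of representatives `{τ_s ∘ α : s ∈ G}`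
of the outer class of `α`. -/
def isogredienceSetoid {G : Type*} [Group G] (α : MulAut G) :
    Setoid {β : MulAut G // ∃ s : G, β = MulAut.conj s * α} where
  r β₁ β₂ := Isogredient β₁.1 β₂.1
  iseqv := by
    refine ⟨fun β => ⟨1, by simp⟩, ?_, ?_⟩
    · rintro β₁ β₂ ⟨h, hh⟩
      exact ⟨h⁻¹, by rw [hh, map_inv]; group⟩
    · rintro β₁ β₂ β₃ ⟨h, hh⟩ ⟨k, hk⟩
      exact ⟨k * h, by rw [hk, hh, map_mul]; group⟩

theorem conj_mul_conj_mul_conj_inv {G : Type*} [Group G] (α : MulAut G) (h s : G) :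
    MulAut.conj h * (MulAut.conj s * α) * (MulAut.conj h)⁻¹ =
      MulAut.conj (h * s * (α h)⁻¹) * α := by
  ext x
  simp [← map_inv, mul_assoc]

theorem conj_mul_eq_iff {G : Type*} [Group G] (α : MulAut G) (a b : G) :
    MulAut.conj b * α = MulAut.conj a * α ↔ ∃ c ∈ Subgroup.center G, b = a * c := by
  rw [mul_left_inj]
  constructor
  · intro hab
    refine ⟨a⁻¹ * b, Subgroup.mem_center_iff.2 fun g => ?_, by group⟩
    have hg := DFunLike.congr_fun hab g
    simp only [MulAut.conj_apply] at hg
    calc g * (a⁻¹ * b) = a⁻¹ * (a * g * a⁻¹) * b := by group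
      _ = a⁻¹ * b * g := by rw [← hg]; group
  · rintro ⟨c, hc, rfl⟩
    ext g
    have hg := Subgroup.mem_center_iff.1 hc g
    simp only [MulAut.conj_apply]
    calc a * c * g * (a * c)⁻¹ = a * (c * g) * c⁻¹ * a⁻¹ := by group
      _ = a * g * a⁻¹ := by rw [← hg]; group

theorem isogredient_conj_mul_iff {G : Type*} [Group G] (α : MulAut G) (s q : G) :
    Isogredient (MulAut.conj s * α) (MulAut.conj q * α) ↔
      ∃ (h : G) (c : G), c ∈ Subgroup.center G ∧ q = h * s * (α h)⁻¹ * c := by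
  simp only [Isogredient, conj_mul_conj_mul_conj_inv, conj_mul_eq_iff]

theorem twistedConj_mk_iff {G : Type*} [Group G] (α : MulAut G)
    (αbar : (G ⧸ Subgroup.center G) ≃* (G ⧸ Subgroup.center G))
    (hcomm : ∀ g : G, αbar (g : G ⧸ Subgroup.center G) =
      ((α g : G) : G ⧸ Subgroup.center G)) (s q : G) :
    (twistedConjSetoid αbar).r (s : G ⧸ Subgroup.center G) (q : G ⧸ Subgroup.center G) ↔
      ∃ (h : G) (c : G), c ∈ Subgroup.center G ∧ q = h * s * (α h)⁻¹ * c := by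
  change (∃ x : G ⧸ Subgroup.center G, (q : G ⧸ Subgroup.center G) = x * s * (αbar x)⁻¹) ↔ _
  rw [(QuotientGroup.mk_surjective (s := Subgroup.center G)).exists]
  refine exists_congr fun h => ?_
  rw [hcomm, ← QuotientGroup.mk_inv, ← QuotientGroup.mk_mul, ← QuotientGroup.mk_mul, eq_comm,
    QuotientGroup.eq]
  constructor
  · exact fun hc => ⟨_, hc, by group⟩
  · rintro ⟨c, hc, rfl⟩
    simpa [mul_assoc] using hc

/-- Two representatives `τ_s∘α` and `τ_q∘α` of an outer class are isogredient iff
`q = h·s·α(h)⁻¹·c` for some `h ∈ G` and some central `c`; consequently the number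
of isogredience classes equals the Reidemeister number of the induced automorphism
`ᾱ` on `G/Z(G)`. -/
theorem stmt_18 {G : Type*} [Group G] (α : MulAut G)
    (αbar : (G ⧸ Subgroup.center G) ≃* (G ⧸ Subgroup.center G))
    (hcomm : ∀ g : G, αbar (g : G ⧸ Subgroup.center G) =
      ((α g : G) : G ⧸ Subgroup.center G)) :
    (∀ s q : G, Isogredient (MulAut.conj s * α) (MulAut.conj q * α) ↔
        ∃ (h : G) (c : G), c ∈ Subgroup.center G ∧ q = h * s * (α h)⁻¹ * c) ∧
      Cardinal.mk (Quotient (isogredienceSetoid α)) =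
        Cardinal.mk (Quotient (twistedConjSetoid αbar)) := by
  refine ⟨isogredient_conj_mul_iff α, ?_⟩
  let f : G → Quotient (isogredienceSetoid α) := fun s => ⟦⟨MulAut.conj s * α, s, rfl⟩⟧
  let g : G → Quotient (twistedConjSetoid αbar) := fun s => ⟦(s : G ⧸ Subgroup.center G)⟧
  have hf : Function.Surjective f := by
    rintro ⟨_, s, rfl⟩
    exact ⟨s, rfl⟩
  have hg : Function.Surjective g :=
    Quotient.mk_surjective.comp QuotientGroup.mk_surjective
  have hker : Setoid.ker f = Setoid.ker g := by
    ext s q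
    rw [Setoid.ker_def, Setoid.ker_def]
    refine Quotient.eq.trans (Iff.trans ?_ Quotient.eq.symm)
    exact (isogredient_conj_mul_iff α s q).trans (twistedConj_mk_iff α αbar hcomm s q).symm
  rw [← Cardinal.mk_congr (Setoid.quotientKerEquivOfSurjective f hf), hker]
  exact Cardinal.mk_congr (Setoid.quotientKerEquivOfSurjective g hg)
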